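/- Let κ = e₁ ∈ S² and let φ ∈ C¹(S²; ℝ) be supported in {q ∈ S² : q·e₁ ≥ 0}. Then (2πi)^{-1} ∫_{S²} N e^{i(1 − q·e₁)N} φ(q) dS(q) → φ(e₁) as N → ∞. -/

import Mathlib

open MeasureTheory Real Filter Metric
open scoped RealInnerProductSpace Topology

noncomputable section

/-!
In spherical coordinates around `e`, the height `⟪q, e⟫ = cos θ` has derivative `-sin θ`, which is
exactly the density of the surface measure. After integrating `Φ` over the parallels, the
oscillatory integral is therefore `∫ N ψ' exp (i N ψ) G` with `ψ = 1 - cos` and `G` of class `C¹`,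
and one integration by parts leaves the two boundary terms, `2πi Φ(e)` and
`-2πi exp (2iN) Φ(-e)`, plus `i ∫ exp (i N ψ) G'`, which vanishes in the limit by the
Riemann-Lebesgue lemma in the variable `ψ`. The support condition kills the antipodal term.
-/

section OscillatoryIntegrals

variable {F : Type*} [NormedAddCommGroup F] [NormedSpace ℂ F]

lemma tendsto_integral_exp_I_mul_smul_cocompact (f : ℝ → F) :
    Tendsto (fun N : ℝ => ∫ t : ℝ, Complex.exp (Complex.I * t * N) • f t)
      (cocompact ℝ) (𝓝 0) := by
  have hscale : Tendsto (fun N : ℝ => -(2 * π)⁻¹ * N) (cocompact ℝ) (cocompact ℝ) :=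
    tendsto_cocompact_mul_left₀ (by simp [pi_ne_zero])
  refine ((Real.tendsto_integral_exp_smul_cocompact f).comp hscale).congr fun N => ?_
  refine integral_congr_ae (.of_forall fun t => ?_)
  simp only [Circle.smul_def, Real.fourierChar_apply]
  congr 2
  have : (π : ℂ) ≠ 0 := by exact_mod_cast pi_ne_zero
  push_cast
  field_simp

lemma tendsto_setIntegral_exp_phase_smul_cocompact {ψ ψ' : ℝ → ℝ} {s : Set ℝ}
    (hs : MeasurableSet s) (hψ : ∀ x ∈ s, HasDerivWithinAt ψ (ψ' x) s x)
    (hψ' : ∀ x ∈ s, ψ' x ≠ 0) (hinj : Set.InjOn ψ s) (f : ℝ → F) :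
    Tendsto (fun N : ℝ => ∫ x in s, Complex.exp (Complex.I * ψ x * N) • f x)
      (cocompact ℝ) (𝓝 0) := by
  let g : ℝ → F := fun t => |ψ' (Function.invFunOn ψ s t)|⁻¹ • f (Function.invFunOn ψ s t)
  have himage : MeasurableSet (ψ '' s) :=
    hs.image_of_continuousOn_injOn (fun x hx => (hψ x hx).continuousWithinAt) hinj
  refine (tendsto_integral_exp_I_mul_smul_cocompact ((ψ '' s).indicator g)).congr fun N => ?_
  simp_rw [← Set.indicator_smul_apply (ψ '' s) (fun t : ℝ => Complex.exp (Complex.I * t * N)) g]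
  rw [integral_indicator himage, integral_image_eq_integral_abs_deriv_smul hs hψ hinj]
  refine setIntegral_congr_fun hs fun x hx => ?_
  have hinv : Function.invFunOn ψ s (ψ x) = x := hinj.leftInvOn_invFunOn hx
  simp only [g, hinv]
  rw [smul_comm, smul_smul, mul_inv_cancel₀ (abs_ne_zero.2 (hψ' x hx)), one_smul]

lemma injOn_Ioo_of_deriv_ne_zero {f : ℝ → ℝ} {a b : ℝ} (hf : ContinuousOn f (Set.Ioo a b))
    (hf' : ∀ x ∈ Set.Ioo a b, deriv f x ≠ 0) : Set.InjOn f (Set.Ioo a b) := by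
  intro x hx y hy hxy
  by_contra hne
  wlog hlt : x < y generalizing x y
  · exact this hy hx hxy.symm (Ne.symm hne) ((not_lt.1 hlt).lt_of_ne' hne)
  have hsub : Set.Icc x y ⊆ Set.Ioo a b := Set.Icc_subset_Ioo hx.1 hy.2
  obtain ⟨c, hc, hc'⟩ := exists_deriv_eq_zero hlt (hf.mono hsub) hxy
  exact hf' c (hsub (Set.Ioo_subset_Icc_self hc)) hc'

variable {ψ : ℝ → ℝ} {G : ℝ → F} {a b : ℝ}

lemma hasDerivAt_exp_phase (hψ : Differentiable ℝ ψ) (N x : ℝ) :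
    HasDerivAt (fun x : ℝ => Complex.exp (Complex.I * ψ x * N))
      (Complex.exp (Complex.I * ψ x * N) * (Complex.I * deriv ψ x * N)) x :=
  (((hψ x).hasDerivAt.ofReal_comp.const_mul Complex.I).mul_const (N : ℂ)).cexp

lemma intervalIntegral_deriv_phase_smul [CompleteSpace F] (hψ : ContDiff ℝ 1 ψ)
    (hG : ContDiff ℝ 1 G) (a b N : ℝ) :
    ∫ x in a..b, (N * Complex.exp (Complex.I * ψ x * N) * deriv ψ x) • G x =
      Complex.I • (Complex.exp (Complex.I * ψ a * N) • G a -
        Complex.exp (Complex.I * ψ b * N) • G b +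
        ∫ x in a..b, Complex.exp (Complex.I * ψ x * N) • deriv G x) := by
  have hψc := hψ.continuous
  have hparts := intervalIntegral.integral_smul_deriv_eq_deriv_smul (a := a) (b := b)
    (fun x _ => hasDerivAt_exp_phase (hψ.differentiable one_ne_zero) N x)
    (fun x _ => (hG.differentiable one_ne_zero x).hasDerivAt)
    (Continuous.intervalIntegrable (by fun_prop) _ _)
    (hG.continuous_deriv_one.intervalIntegrable _ _)
  have hfactor : ∀ x : ℝ, (N * Complex.exp (Complex.I * ψ x * N) * deriv ψ x) • G x =
      -Complex.I • (Complex.exp (Complex.I * ψ x * N) * (Complex.I * deriv ψ x * N)) • G x := by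
    intro x
    rw [smul_smul]
    congr 1
    linear_combination (N * Complex.exp (Complex.I * ψ x * N) * (deriv ψ x : ℝ)) * Complex.I_mul_I
  simp_rw [hfactor]
  rw [intervalIntegral.integral_smul, hparts]
  module

theorem tendsto_intervalIntegral_deriv_phase_smul [CompleteSpace F] (hab : a ≤ b)
    (hψ : ContDiff ℝ 1 ψ) (hψ' : ∀ x ∈ Set.Ioo a b, deriv ψ x ≠ 0) (hG : ContDiff ℝ 1 G) :
    Tendsto (fun N : ℝ =>
        (∫ x in a..b, (N * Complex.exp (Complex.I * ψ x * N) * deriv ψ x) • G x) -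
          Complex.I • (Complex.exp (Complex.I * ψ a * N) • G a -
            Complex.exp (Complex.I * ψ b * N) • G b))
      (cocompact ℝ) (𝓝 0) := by
  have hRL := tendsto_setIntegral_exp_phase_smul_cocompact measurableSet_Ioo
    (fun x _ => (hψ.differentiable one_ne_zero x).hasDerivAt.hasDerivWithinAt) hψ'
    (injOn_Ioo_of_deriv_ne_zero hψ.continuous.continuousOn hψ') (deriv G)
  rw [← smul_zero Complex.I]
  refine (hRL.const_smul Complex.I).congr fun N => ?_
  rw [intervalIntegral_deriv_phase_smul hψ hG, ← smul_sub, add_sub_cancel_left,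
    intervalIntegral.integral_of_le hab, integral_Ioc_eq_integral_Ioo]

end OscillatoryIntegrals

section ParametricIntegral

variable {X F : Type*} [NormedAddCommGroup X] [NormedSpace ℝ X] [ProperSpace X]
  [NormedAddCommGroup F] [NormedSpace ℝ F]

lemma hasFDerivAt_intervalIntegral_of_contDiff {H : X × ℝ → F} (hH : ContDiff ℝ 1 H)
    (a b : ℝ) (x₀ : X) :
    HasFDerivAt (fun x => ∫ t in a..b, H (x, t))
      (∫ t in a..b, fderiv ℝ H (x₀, t) ∘L .inl ℝ X ℝ) x₀ := by
  have hHc := hH.continuous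
  have hDc : Continuous fun p : X × ℝ => fderiv ℝ H p ∘L .inl ℝ X ℝ :=
    (hH.continuous_fderiv one_ne_zero).clm_comp continuous_const
  obtain ⟨C, hC⟩ := ((isCompact_closedBall x₀ 1).prod isCompact_uIcc).exists_bound_of_continuousOn
    (f := fun p : X × ℝ => fderiv ℝ H p ∘L .inl ℝ X ℝ) (s := closedBall x₀ 1 ×ˢ Set.uIcc a b)
    hDc.continuousOn
  refine intervalIntegral.hasFDerivAt_integral_of_dominated_of_fderiv_le
    (F' := fun x t => fderiv ℝ H (x, t) ∘L .inl ℝ X ℝ) (bound := fun _ => C)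
    (closedBall_mem_nhds x₀ one_pos)
    (.of_forall fun x => Continuous.aestronglyMeasurable (by fun_prop))
    (Continuous.intervalIntegrable (by fun_prop) _ _)
    (hDc.comp (by fun_prop)).aestronglyMeasurable
    (.of_forall fun t ht x hx => hC (x, t) ⟨hx, Set.uIoc_subset_uIcc ht⟩)
    (by simp) (.of_forall fun t _ x _ => ?_)
  exact (hH.differentiable one_ne_zero (x, t)).hasFDerivAt.comp x (hasFDerivAt_prodMk_left x t)

lemma contDiff_one_intervalIntegral {H : X × ℝ → F} (hH : ContDiff ℝ 1 H) (a b : ℝ) :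
    ContDiff ℝ 1 fun x => ∫ t in a..b, H (x, t) := by
  have hD := hasFDerivAt_intervalIntegral_of_contDiff hH a b
  refine contDiff_one_iff_fderiv.2 ⟨fun x => (hD x).differentiableAt, ?_⟩
  rw [funext fun x => (hD x).fderiv]
  exact intervalIntegral.continuous_parametric_intervalIntegral_of_continuous'
    ((hH.continuous_fderiv one_ne_zero).clm_comp continuous_const) a b

end ParametricIntegral

section SphereMeasure

variable {E : Type*} [NormedAddCommGroup E] [NormedSpace ℝ E]

open scoped Pointwise in
lemma Ioo_smul_coe_image_preimage_sphere (A : Set E) :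
    Set.Ioo (0 : ℝ) 1 • ((↑) '' ((↑) ⁻¹' A : Set (sphere (0 : E) 1)) : Set E) =
      (fun x => ‖x‖⁻¹ • x) ⁻¹' A ∩ (ball 0 1 \ {0}) := by
  ext x
  simp only [Set.mem_smul, Set.mem_image, Set.mem_preimage, Set.mem_inter_iff, Set.mem_sdiff,
    mem_ball_zero_iff, Set.mem_singleton_iff]
  constructor
  · rintro ⟨r, ⟨hr0, hr1⟩, _, ⟨q, hq, rfl⟩, rfl⟩
    have hnorm : ‖r • (q : E)‖ = r := by simp [norm_smul, abs_of_pos hr0]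
    rw [hnorm, smul_smul, inv_mul_cancel₀ hr0.ne', one_smul, ← norm_eq_zero, hnorm]
    exact ⟨hq, hr1, hr0.ne'⟩
  · rintro ⟨hxA, hx1, hx0⟩
    have hunit : ‖x‖⁻¹ • x ∈ sphere (0 : E) 1 := by simp [norm_smul, hx0]
    exact ⟨‖x‖, ⟨norm_pos_iff.2 hx0, hx1⟩, _, ⟨⟨_, hunit⟩, hxA, rfl⟩,
      smul_inv_smul₀ (norm_ne_zero_iff.2 hx0) x⟩

lemma map_coe_toSphere [MeasurableSpace E] [BorelSpace E] (μ : Measure E) :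
    μ.toSphere.map (↑) = Module.finrank ℝ E •
      (μ.restrict (ball 0 1 \ {0})).map (fun x => ‖x‖⁻¹ • x) := by
  have hdir : Measurable fun x : E => ‖x‖⁻¹ • x := by fun_prop
  ext A hA
  rw [Measure.map_apply measurable_subtype_coe hA,
    μ.toSphere_apply' (measurable_subtype_coe hA), Ioo_smul_coe_image_preimage_sphere,
    Measure.smul_apply, Measure.map_apply hdir hA, Measure.restrict_apply (hdir hA), nsmul_eq_mul]

end SphereMeasure

lemma lintegral_upperHalfPlane_eq_polar {H : ℝ × ℝ → ENNReal} (hH : Measurable H) :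
    ∫⁻ x, ∫⁻ y in Set.Ioi 0, H (x, y) =
      ∫⁻ r in Set.Ioi 0, ∫⁻ θ in Set.Ioo 0 π,
        ENNReal.ofReal r * H (r * cos θ, r * sin θ) := by
  have hU : MeasurableSet (Set.univ ×ˢ Set.Ioi 0 : Set (ℝ × ℝ)) := .prod .univ measurableSet_Ioi
  have hsector : (polarCoord.symm ⁻¹' Set.univ ×ˢ Set.Ioi 0) ∩ polarCoord.target =
      Set.Ioi 0 ×ˢ Set.Ioo 0 π := by
    ext ⟨r, θ⟩
    simp only [polarCoord_target, polarCoord_symm_apply, Set.mem_inter_iff, Set.mem_preimage,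
      Set.mem_prod, Set.mem_univ, true_and, Set.mem_Ioi, Set.mem_Ioo]
    constructor
    · rintro ⟨hsin, hr, hθ, hθ'⟩
      refine ⟨hr, lt_of_not_ge fun hθ0 => ?_, hθ'⟩
      exact ((pos_iff_pos_of_mul_pos hsin).1 hr).not_ge
        (sin_nonpos_of_nonpos_of_neg_pi_le hθ0 hθ.le)
    · rintro ⟨hr, hθ, hθ'⟩
      exact ⟨mul_pos hr (sin_pos_of_pos_of_lt_pi hθ hθ'), hr, by linarith, hθ'⟩
  have hpolar : Measurable (polarCoord.symm : ℝ × ℝ → ℝ × ℝ) :=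
    continuous_polarCoord_symm.measurable
  calc ∫⁻ x, ∫⁻ y in Set.Ioi 0, H (x, y)
      = ∫⁻ p, (Set.univ ×ˢ Set.Ioi 0).indicator H p := by
        rw [lintegral_indicator hU, Measure.volume_eq_prod, ← Measure.prod_restrict,
          Measure.restrict_univ, lintegral_prod _ hH.aemeasurable]
    _ = ∫⁻ p in polarCoord.target, (polarCoord.symm ⁻¹' Set.univ ×ˢ Set.Ioi 0).indicator
          (fun p => ENNReal.ofReal p.1 * H (polarCoord.symm p)) p := by
        rw [← lintegral_comp_polarCoord_symm]
        refine lintegral_congr fun p => ?_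
        rw [smul_eq_mul, ← Set.indicator_comp_right, Set.indicator_mul_right]
        rfl
    _ = ∫⁻ p in Set.Ioi 0 ×ˢ Set.Ioo 0 π, ENNReal.ofReal p.1 * H (polarCoord.symm p) := by
        rw [lintegral_indicator (hpolar hU), Measure.restrict_restrict (hpolar hU), hsector]
    _ = _ := by
        rw [Measure.volume_eq_prod, ← Measure.prod_restrict, lintegral_prod]
        · simp only [polarCoord_symm_apply]
        · exact (by fun_prop : Measurable fun p : ℝ × ℝ =>
            ENNReal.ofReal p.1 * H (polarCoord.symm p)).aemeasurable

lemma lintegral_Ioo_zero_one_pow (n : ℕ) :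
    ∫⁻ r in Set.Ioo (0 : ℝ) 1, ENNReal.ofReal (r ^ n) = (n + 1 : ENNReal)⁻¹ := by
  rw [restrict_Ioo_eq_restrict_Ioc, ← ofReal_integral_eq_lintegral_ofReal
    (intervalIntegral.intervalIntegrable_pow n).1, ← intervalIntegral.integral_of_le zero_le_one,
    integral_pow]
  · simp [ENNReal.ofReal_inv_of_pos (by positivity : (0 : ℝ) < n + 1),
      ENNReal.ofReal_add]
  · filter_upwards [ae_restrict_mem measurableSet_Ioc] with r hr using pow_nonneg hr.1.le n

section SphericalCoordinates

variable {E : Type*} [NormedAddCommGroup E] [InnerProductSpace ℝ E]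

lemma exists_orthonormalBasis_fin_three_zero_eq [FiniteDimensional ℝ E]
    (hE : Module.finrank ℝ E = 3) {e : E} (he : ‖e‖ = 1) :
    ∃ b : OrthonormalBasis (Fin 3) ℝ E, b 0 = e := by
  have horth : Orthonormal ℝ (({0} : Set (Fin 3)).domRestrict fun _ => e) :=
    ⟨fun _ => he, fun i j hij => (hij (Subsingleton.elim i j)).elim⟩
  obtain ⟨b, hb⟩ := horth.exists_orthonormalBasis_extension_of_card_eq (by simpa using hE)
  exact ⟨b, hb 0 rfl⟩

/-- The point of the unit sphere with polar angle `p.1`, measured from `b 0`, and azimuth `p.2`. -/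
def sphericalPoint (b : OrthonormalBasis (Fin 3) ℝ E) (p : ℝ × ℝ) : E :=
  cos p.1 • b 0 + (sin p.1 * cos p.2) • b 1 + (sin p.1 * sin p.2) • b 2

/-- The measure `sin θ dθ dω` on `(0, π) × (-π, π)`, which is the surface measure of the unit sphere
read in the angles of `sphericalPoint`. -/
def sphericalAngleMeasure : Measure (ℝ × ℝ) :=
  ((volume.restrict (Set.Ioo 0 π)).withDensity fun θ => ENNReal.ofReal (sin θ)).prod
    (volume.restrict (Set.Ioo (-π) π))

variable (b : OrthonormalBasis (Fin 3) ℝ E)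

lemma contDiff_sphericalPoint {n : WithTop ℕ∞} : ContDiff ℝ n (sphericalPoint b) := by
  unfold sphericalPoint
  fun_prop

lemma continuous_sphericalPoint : Continuous (sphericalPoint b) :=
  (contDiff_sphericalPoint b (n := 0)).continuous

lemma inner_sphericalPoint_zero (p : ℝ × ℝ) : ⟪sphericalPoint b p, b 0⟫ = cos p.1 := by
  simp [sphericalPoint, inner_add_left, inner_smul_left, b.inner_eq_ite]

lemma norm_sphericalPoint (p : ℝ × ℝ) : ‖sphericalPoint b p‖ = 1 := by
  rw [← sq_eq_sq₀ (norm_nonneg _) zero_le_one, ← real_inner_self_eq_norm_sq]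
  simp only [sphericalPoint, inner_add_left, inner_add_right, inner_smul_left, inner_smul_right,
    b.inner_eq_ite]
  simp only [conj_trivial, ↓reduceIte, mul_one, Fin.isValue, one_ne_zero, mul_zero, add_zero,
    Fin.reduceEq, zero_ne_one, zero_add, one_pow]
  linear_combination sin_sq_add_cos_sq p.1 + sin p.1 ^ 2 * sin_sq_add_cos_sq p.2

lemma sphericalPoint_zero_left (ω : ℝ) : sphericalPoint b (0, ω) = b 0 := by
  simp [sphericalPoint]

lemma sphericalPoint_pi_left (ω : ℝ) : sphericalPoint b (π, ω) = -b 0 := by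
  simp [sphericalPoint]

variable [FiniteDimensional ℝ E] [MeasurableSpace E] [BorelSpace E]

lemma measurePreserving_orthonormalBasis_fin_three :
    MeasurePreserving fun x : ℝ × ℝ × ℝ => x.1 • b 0 + x.2.1 • b 1 + x.2.2 • b 2 := by
  have hprod : MeasurePreserving (Prod.map id (MeasurableEquiv.finTwoArrow (α := ℝ)).symm)
      (volume : Measure (ℝ × ℝ × ℝ)) volume :=
    (MeasurePreserving.id _).prod (volume_preserving_finTwoArrow ℝ).symm
  have hcoord := b.measurePreserving_repr_symm.comp <| (PiLp.volume_preserving_toLp (Fin 3)).comp <|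
    (volume_preserving_piFinSuccAbove (fun _ : Fin 3 => ℝ) 0).symm.comp hprod
  suffices h : (fun x : ℝ × ℝ × ℝ => x.1 • b 0 + x.2.1 • b 1 + x.2.2 • b 2) = _ from h ▸ hcoord
  funext x
  simp only [Function.comp_apply, ← b.sum_repr_symm, Fin.sum_univ_three]
  rfl

lemma lintegral_eq_cylindrical {g : E → ENNReal} (hg : Measurable g) :
    ∫⁻ x, g x = ∫⁻ a : ℝ, ∫⁻ ρ in Set.Ioi 0, ENNReal.ofReal ρ *
      ∫⁻ ω in Set.Ioo (-π) π, g (a • b 0 + (ρ * cos ω) • b 1 + (ρ * sin ω) • b 2) := by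
  have hcoord := measurePreserving_orthonormalBasis_fin_three b
  rw [← hcoord.lintegral_comp hg, Measure.volume_eq_prod, lintegral_prod _ (by fun_prop)]
  refine lintegral_congr fun a => ?_
  have hm : Measurable fun p : ℝ × ℝ =>
      ENNReal.ofReal p.1 * g (a • b 0 + (p.1 * cos p.2) • b 1 + (p.1 * sin p.2) • b 2) := by
    fun_prop
  rw [← lintegral_comp_polarCoord_symm, polarCoord_target, Measure.volume_eq_prod,
    ← Measure.prod_restrict]
  simp only [polarCoord_symm_apply, smul_eq_mul]
  rw [lintegral_prod _ hm.aemeasurable]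
  exact lintegral_congr fun ρ => lintegral_const_mul' _ _ ENNReal.ofReal_ne_top

lemma lintegral_sphericalAngleMeasure {g : ℝ × ℝ → ENNReal} (hg : Measurable g) :
    ∫⁻ p, g p ∂sphericalAngleMeasure =
      ∫⁻ θ in Set.Ioo 0 π, ENNReal.ofReal (sin θ) * ∫⁻ ω in Set.Ioo (-π) π, g (θ, ω) := by
  rw [sphericalAngleMeasure, lintegral_prod _ hg.aemeasurable,
    lintegral_withDensity_eq_lintegral_mul _ (by fun_prop) hg.lintegral_prod_right']
  rfl

lemma lintegral_eq_spherical {g : E → ENNReal} (hg : Measurable g) :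
    ∫⁻ x, g x = ∫⁻ r in Set.Ioi 0, ENNReal.ofReal (r ^ 2) *
      ∫⁻ p, g (r • sphericalPoint b p) ∂sphericalAngleMeasure := by
  have hS : Measurable (sphericalPoint b) := (continuous_sphericalPoint b).measurable
  have hm : Measurable fun q : ℝ × ℝ => ENNReal.ofReal q.2 *
      ∫⁻ ω in Set.Ioo (-π) π, g (q.1 • b 0 + (q.2 * cos ω) • b 1 + (q.2 * sin ω) • b 2) := by
    refine .mul (by fun_prop) (Measurable.lintegral_prod_right' (f := fun x : (ℝ × ℝ) × ℝ =>
      g (x.1.1 • b 0 + (x.1.2 * cos x.2) • b 1 + (x.1.2 * sin x.2) • b 2)) (by fun_prop))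
  rw [lintegral_eq_cylindrical b hg, lintegral_upperHalfPlane_eq_polar hm]
  refine setLIntegral_congr_fun measurableSet_Ioi fun r (hr : 0 < r) => ?_
  rw [lintegral_sphericalAngleMeasure (by fun_prop),
    ← lintegral_const_mul' _ _ ENNReal.ofReal_ne_top]
  refine lintegral_congr fun θ => ?_
  simp only [sphericalPoint, smul_add, smul_smul]
  rw [← mul_assoc, ← mul_assoc, ← ENNReal.ofReal_mul hr.le, ← ENNReal.ofReal_mul (sq_nonneg r)]
  ring_nf

lemma setLIntegral_unit_ball_direction {g : E → ENNReal} (hg : Measurable g) :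
    ∫⁻ x in ball 0 1 \ {0}, g (‖x‖⁻¹ • x) =
      3⁻¹ * ∫⁻ p, g (sphericalPoint b p) ∂sphericalAngleMeasure := by
  have hB : MeasurableSet (ball (0 : E) 1 \ {0}) := measurableSet_ball.diff (.singleton 0)
  rw [← lintegral_indicator hB, lintegral_eq_spherical b (.indicator (by fun_prop) hB)]
  calc ∫⁻ r in Set.Ioi 0, ENNReal.ofReal (r ^ 2) * ∫⁻ p, (ball 0 1 \ {0}).indicator
          (fun x => g (‖x‖⁻¹ • x)) (r • sphericalPoint b p) ∂sphericalAngleMeasure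
      = ∫⁻ r in Set.Ioi 0, (Set.Iio 1).indicator (fun r => ENNReal.ofReal (r ^ 2) *
          ∫⁻ p, g (sphericalPoint b p) ∂sphericalAngleMeasure) r := by
        refine setLIntegral_congr_fun measurableSet_Ioi fun r (hr : 0 < r) => ?_
        have hnorm (p : ℝ × ℝ) : ‖r • sphericalPoint b p‖ = r := by
          rw [norm_smul, norm_sphericalPoint, mul_one, norm_of_nonneg hr.le]
        have hne (p : ℝ × ℝ) : sphericalPoint b p ≠ 0 :=
          norm_ne_zero_iff.1 (by simp [norm_sphericalPoint])
        by_cases hr1 : r < 1 <;>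
          simp [Set.indicator, hnorm, hne, smul_smul, hr.ne', hr1]
    _ = 3⁻¹ * ∫⁻ p, g (sphericalPoint b p) ∂sphericalAngleMeasure := by
        rw [lintegral_indicator measurableSet_Iio, Measure.restrict_restrict measurableSet_Iio,
          Set.Iio_inter_Ioi, lintegral_mul_const _ (by fun_prop), lintegral_Ioo_zero_one_pow]
        norm_num

theorem map_coe_toSphere_eq_map_sphericalPoint :
    (volume : Measure E).toSphere.map (↑) = sphericalAngleMeasure.map (sphericalPoint b) := by
  have hdim : Module.finrank ℝ E = 3 := by simp [Module.finrank_eq_card_basis b.toBasis]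
  rw [map_coe_toSphere, hdim]
  refine Measure.ext_of_lintegral _ fun g hg => ?_
  rw [lintegral_smul_measure, lintegral_map hg (by fun_prop),
    lintegral_map hg (continuous_sphericalPoint b).measurable,
    setLIntegral_unit_ball_direction b hg, nsmul_eq_mul, ← mul_assoc]
  simp [ENNReal.mul_inv_cancel]

variable {F : Type*} [NormedAddCommGroup F] [NormedSpace ℝ F]

theorem integral_toSphere_eq_spherical {g : E → F} (hg : Continuous g) :
    ∫ q : sphere (0 : E) 1, g q ∂(volume : Measure E).toSphere =
      ∫ θ in (0 : ℝ)..π, sin θ • ∫ ω in (-π)..π, g (sphericalPoint b (θ, ω)) := by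
  have hS := continuous_sphericalPoint b
  have hint : Integrable (fun p => g (sphericalPoint b p)) sphericalAngleMeasure := by
    refine (integrable_map_measure hg.aestronglyMeasurable hS.measurable.aemeasurable).1 ?_
    rw [← map_coe_toSphere_eq_map_sphericalPoint b,
      integrable_map_measure hg.aestronglyMeasurable measurable_subtype_coe.aemeasurable]
    exact (hg.comp continuous_subtype_val).integrable_of_hasCompactSupport
      (HasCompactSupport.of_compactSpace _)
  rw [← integral_map (f := g) measurable_subtype_coe.aemeasurable hg.aestronglyMeasurable,
    map_coe_toSphere_eq_map_sphericalPoint b,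
    integral_map hS.measurable.aemeasurable hg.aestronglyMeasurable, sphericalAngleMeasure,
    integral_prod _ hint, integral_withDensity_eq_integral_toReal_smul (by fun_prop) (by simp),
    intervalIntegral.integral_of_le pi_pos.le, integral_Ioc_eq_integral_Ioo]
  refine setIntegral_congr_fun measurableSet_Ioo fun θ hθ => ?_
  rw [ENNReal.toReal_ofReal (sin_pos_of_mem_Ioo hθ).le,
    intervalIntegral.integral_of_le (by linarith [pi_pos]), integral_Ioc_eq_integral_Ioo]

end SphericalCoordinates

section ParallelIntegral

variable {E : Type*} [NormedAddCommGroup E] [InnerProductSpace ℝ E]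
  {F : Type*} [NormedAddCommGroup F] [NormedSpace ℝ F] (b : OrthonormalBasis (Fin 3) ℝ E)

/-- The integral of `Φ`, with respect to the azimuth, over the parallel at polar angle `θ` from
`b 0`. The azimuth is not weighted by the radius `sin θ` of the parallel, so the poles `θ = 0, π`
give `2π` times the value there. -/
def parallelIntegral (Φ : E → F) (θ : ℝ) : F :=
  ∫ ω in (-π)..π, Φ (sphericalPoint b (θ, ω))

lemma contDiff_parallelIntegral {Φ : E → F} (hΦ : ContDiff ℝ 1 Φ) :
    ContDiff ℝ 1 (parallelIntegral b Φ) :=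
  contDiff_one_intervalIntegral (hΦ.comp (contDiff_sphericalPoint b)) _ _

lemma parallelIntegral_zero [CompleteSpace F] (Φ : E → F) :
    parallelIntegral b Φ 0 = (2 * π) • Φ (b 0) := by
  simp [parallelIntegral, sphericalPoint_zero_left, two_mul]

lemma parallelIntegral_pi [CompleteSpace F] (Φ : E → F) :
    parallelIntegral b Φ π = (2 * π) • Φ (-b 0) := by
  simp [parallelIntegral, sphericalPoint_pi_left, two_mul]

end ParallelIntegral

section StationaryPhase

variable {E : Type*} [NormedAddCommGroup E] [InnerProductSpace ℝ E] [FiniteDimensional ℝ E]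
  [MeasurableSpace E] [BorelSpace E] {F : Type*} [NormedAddCommGroup F] [NormedSpace ℂ F]

lemma integral_toSphere_exp_height_smul (b : OrthonormalBasis (Fin 3) ℝ E) {Φ : E → F}
    (hΦ : Continuous Φ) (N : ℝ) :
    ∫ q : sphere (0 : E) 1,
        (N * Complex.exp (Complex.I * (1 - ⟪(q : E), b 0⟫ : ℝ) * N)) • Φ q
        ∂(volume : Measure E).toSphere =
      ∫ θ in (0 : ℝ)..π, (N * Complex.exp (Complex.I * (1 - cos θ : ℝ) * N) * sin θ) •
        parallelIntegral b Φ θ := by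
  rw [integral_toSphere_eq_spherical b (g := fun x =>
    (N * Complex.exp (Complex.I * (1 - ⟪x, b 0⟫ : ℝ) * N)) • Φ x) (by fun_prop)]
  refine intervalIntegral.integral_congr fun θ _ => ?_
  simp only [inner_sphericalPoint_zero, parallelIntegral, intervalIntegral.integral_smul]
  rw [mul_comm _ ((sin θ : ℝ) : ℂ), mul_smul ((sin θ : ℝ) : ℂ), Complex.coe_smul]

theorem stationary_phase_sphere_d3_general [CompleteSpace F] (hE : Module.finrank ℝ E = 3)
    (e : sphere (0 : E) 1) {Φ : E → F} (hΦ : ContDiff ℝ 1 Φ) :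
    Tendsto (fun N : ℝ =>
        (2 * (π : ℂ) * Complex.I)⁻¹ •
          (∫ q : sphere (0 : E) 1,
            (N * Complex.exp (Complex.I * (1 - ⟪(q : E), (e : E)⟫ : ℝ) * N)) • Φ q
            ∂(volume : Measure E).toSphere) +
          Complex.exp (Complex.I * 2 * N) • Φ (-e))
      (cocompact ℝ) (𝓝 (Φ e)) := by
  obtain ⟨b, hb⟩ := exists_orthonormalBasis_fin_three_zero_eq hE (norm_eq_of_mem_sphere e)
  have hderiv : deriv (fun θ => 1 - cos θ) = sin := by
    funext θ
    simp
  have hphase := tendsto_intervalIntegral_deriv_phase_smul pi_pos.le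
    (contDiff_const.sub contDiff_cos : ContDiff ℝ 1 fun θ => 1 - cos θ)
    (fun θ hθ => by simpa [hderiv] using (sin_pos_of_mem_Ioo hθ).ne')
    (contDiff_parallelIntegral b hΦ)
  have hlim := (hphase.const_smul (2 * (π : ℂ) * Complex.I)⁻¹).add_const (Φ e)
  rw [smul_zero, zero_add] at hlim
  refine hlim.congr fun N => ?_
  have hπ : (π : ℂ) ≠ 0 := by exact_mod_cast pi_ne_zero
  simp only [← hb, hderiv, integral_toSphere_exp_height_smul b hΦ.continuous,
    parallelIntegral_zero, parallelIntegral_pi, ← Complex.coe_smul (2 * π)]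
  rw [cos_zero, cos_pi, sub_self, sub_neg_eq_add, one_add_one_eq_two]
  push_cast
  rw [mul_zero, zero_mul, Complex.exp_zero]
  match_scalars <;> field_simp
  ring

end StationaryPhase

/-- stationary phase on `S² ⊂ ℝ³` at `κ = e₁`: for `φ ∈ C¹(S²;ℝ)` supported
in `{q : q·e₁ ≥ 0}`, `(2πi)^{-1} ∫_{S²} N e^{i(1-q·e₁)N} φ(q) dS(q) → φ(e₁)` as `N → ∞`. -/
theorem stationary_phase_sphere_d3
    (e₁ : sphere (0 : EuclideanSpace ℝ (Fin 3)) 1)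
    (he₁ : (e₁ : EuclideanSpace ℝ (Fin 3)) = EuclideanSpace.single (0 : Fin 3) (1 : ℝ))
    (φ : sphere (0 : EuclideanSpace ℝ (Fin 3)) 1 → ℝ)
    (hφC1 : ∃ Φ : EuclideanSpace ℝ (Fin 3) → ℝ, ContDiff ℝ 1 Φ ∧
      ∀ q : sphere (0 : EuclideanSpace ℝ (Fin 3)) 1, Φ (q : EuclideanSpace ℝ (Fin 3)) = φ q)
    (hφsupp : ∀ q : sphere (0 : EuclideanSpace ℝ (Fin 3)) 1,
      ⟪(q : EuclideanSpace ℝ (Fin 3)), (e₁ : EuclideanSpace ℝ (Fin 3))⟫ < 0 → φ q = 0) :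
    Filter.Tendsto (fun N : ℝ =>
        (2 * (π : ℂ) * Complex.I)⁻¹ *
          ∫ q : sphere (0 : EuclideanSpace ℝ (Fin 3)) 1,
            (N : ℂ) *
              Complex.exp (Complex.I *
                ((1 - ⟪(q : EuclideanSpace ℝ (Fin 3)), (e₁ : EuclideanSpace ℝ (Fin 3))⟫ : ℝ) : ℂ) *
                (N : ℂ)) *
              ((φ q : ℝ) : ℂ)
            ∂(Measure.toSphere (volume : Measure (EuclideanSpace ℝ (Fin 3)))))
      Filter.atTop (𝓝 ((φ e₁ : ℝ) : ℂ)) := by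
  obtain ⟨Φ, hΦ, hΦφ⟩ := hφC1
  have hantipode : φ (-e₁) = 0 := hφsupp (-e₁) (by simp)
  have hlim := stationary_phase_sphere_d3_general (by simp) e₁
    (Complex.ofRealCLM.contDiff.comp hΦ)
  simpa [← coe_neg_sphere, hΦφ, hantipode] using hlim.mono_left atTop_le_cocompact

end
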